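/- Let x_1,…,x_n (robots) and y_1,…,y_n (targets) be 2n mutually independent uniformly distributed random points in the unit square Q = [0,1]² ⊂ ℝ². Fix radii r_comm > 0 and r_sense > 0 and a real ε with 0 < ε < 1. Set θ := min{ √5 · r_sense, √2 · r_comm } and b := ⌈√10 / θ⌉. If n ≥ b² · log( b² / ε ), then with probability at least 1 − ε the following two events hold simultaneously: (i) the geometric graph on x_1,…,x_n with radius r_comm (edge between distinct i, j iff ‖x_i − x_j‖₂ ≤ r_comm) is connected, and (ii) for every j ∈ {1,…,n} there exists i ∈ {1,…,n} with ‖y_j − x_i‖₂ ≤ r_sense. -/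

import Mathlib

open MeasureTheory

/-- The closed unit square `[0,1]² ⊂ ℝ²` (with the Euclidean norm). -/
def unitSquare : Set (EuclideanSpace ℝ (Fin 2)) :=
  {p | ∀ i, p i ∈ Set.Icc (0 : ℝ) 1}

/-- The uniform probability measure on the unit square. -/
noncomputable def unifSquare : Measure (EuclideanSpace ℝ (Fin 2)) :=
  volume.restrict unitSquare

/-- The geometric graph on the points `x 0, …, x (n-1)` with radius `r`: vertices `Fin n`,
with an edge between distinct `i` and `j` iff `‖x i − x j‖₂ ≤ r`. -/
def geomGraph {n : ℕ} (x : Fin n → EuclideanSpace ℝ (Fin 2)) (r : ℝ) : SimpleGraph (Fin n) :=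
  SimpleGraph.fromRel fun i j => ‖x i - x j‖ ≤ r

/-!
Cut the unit cube of dimension `d` into `b ^ d` closed cells of side `1 / b`. A uniform sample of
size `n` misses a given cell with probability `(1 - b ^ (-d)) ^ n ≤ exp (-n * b ^ (-d))`, so by the
union bound all cells are hit with probability at least `1 - ε`. On that event the conclusions are
deterministic: two points of one cell are within `√d / b`, which gives coverage, and two points of
cells sharing a facet are within `√(d + 3) / b` (one coordinate differs by at most `2 / b`, the
others by at most `1 / b`), so connectivity of the grid of cells passes to the geometric graph.
For `d = 2`, `√10 / θ` is the larger of `√2 / r_sense` and `√5 / r_comm`, which makes both bounds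
hold for `b = ⌈√10 / θ⌉`.
-/

section GeometricGraph

variable {V : Type*}

/-- The geometric graph with radius `r` on points `x v` of an arbitrary seminormed group;
`geomGraph x r` is by `rfl` the case of points in the Euclidean plane. -/
def geometricGraph {E : Type*} [SeminormedAddCommGroup E] (x : V → E) (r : ℝ) : SimpleGraph V :=
  SimpleGraph.fromRel fun v w => ‖x v - x w‖ ≤ r

lemma geometricGraph_reachable_of_norm_sub_le {E : Type*} [SeminormedAddCommGroup E] {x : V → E}
    {r : ℝ} {v w : V} (h : ‖x v - x w‖ ≤ r) : (geometricGraph x r).Reachable v w := by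
  by_cases hvw : v = w
  · exact hvw ▸ .refl v
  · exact (show (geometricGraph x r).Adj v w from ⟨hvw, .inl h⟩).reachable

lemma preconnected_of_cover {κ : Type*} {G : SimpleGraph V} {H : SimpleGraph κ}
    (hH : H.Preconnected) {C : κ → Set V} (hcover : ∀ v, ∃ k, v ∈ C k)
    (hsame : ∀ k, ∀ v ∈ C k, ∀ w ∈ C k, G.Reachable v w)
    (hadj : ∀ k l, H.Adj k l → ∃ v ∈ C k, ∃ w ∈ C l, G.Reachable v w) : G.Preconnected := by
  have along_walk {k l : κ} (p : H.Walk k l) : ∀ v ∈ C k, ∀ w ∈ C l, G.Reachable v w := by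
    induction p with
    | nil => exact hsame _
    | cons hkm _ ih =>
      intro v hv w hw
      obtain ⟨v', hv', m, hm, hvm⟩ := hadj _ _ hkm
      exact (hsame _ v hv v' hv').trans <| hvm.trans <| ih m hm w hw
  intro v w
  obtain ⟨k, hk⟩ := hcover v
  obtain ⟨l, hl⟩ := hcover w
  obtain ⟨p⟩ := hH k l
  exact along_walk p v hk w hl

lemma hasse_preconnected_of_isCodirectedOrder (α : Type*) [PartialOrder α] [LocallyFiniteOrder α]
    [IsCodirectedOrder α] : (SimpleGraph.hasse α).Preconnected := by
  have reachable_of_le {a b : α} (hab : a ≤ b) : (SimpleGraph.hasse α).Reachable a b :=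
    (SimpleGraph.reachable_iff_reflTransGen a b).2 <|
      Relation.ReflTransGen.mono (fun _ _ => Or.inl) _ _ (le_iff_reflTransGen_covBy.1 hab)
  intro a b
  obtain ⟨c, hca, hcb⟩ := exists_le_le a b
  exact (reachable_of_le hca).symm.trans (reachable_of_le hcb)

end GeometricGraph

section Grid

variable {ι : Type*}

/-- The closed unit cube `[0,1]^ι` in Euclidean space; for `ι = Fin 2` it is `unitSquare`. -/
def unitCube (ι : Type*) : Set (EuclideanSpace ℝ ι) :=
  {p | ∀ i, p i ∈ Set.Icc (0 : ℝ) 1}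

/-- The cell with index `a` when `[0,1]^ι` is cut into closed cubes of side `1 / b`; neighbouring
cells overlap in their common face. -/
def gridCell {b : ℕ} (a : ι → Fin b) : Set (EuclideanSpace ℝ ι) :=
  {p | ∀ i, p i ∈ Set.Icc ((a i : ℝ) / b) (((a i : ℝ) + 1) / b)}

lemma gridCell_subset_unitCube {b : ℕ} (a : ι → Fin b) : gridCell a ⊆ unitCube ι := by
  intro p hp i
  have hb : (0 : ℝ) < b := by exact_mod_cast (a i).pos
  have hai : (a i : ℝ) + 1 ≤ b := by exact_mod_cast (a i).isLt
  exact ⟨le_trans (by positivity) (hp i).1, (hp i).2.trans ((div_le_one hb).2 hai)⟩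

lemma exists_fin_mem_Icc_div {b : ℕ} (hb : 0 < b) {u : ℝ} (hu : u ∈ Set.Icc (0 : ℝ) 1) :
    ∃ k : Fin b, u ∈ Set.Icc ((k : ℝ) / b) (((k : ℝ) + 1) / b) := by
  have hb' : (0 : ℝ) < b := by exact_mod_cast hb
  have hle : ⌈u * b⌉₊ ≤ b := Nat.ceil_le.2 (mul_le_of_le_one_left hb'.le hu.2)
  -- With truncated subtraction, `⌈u * b⌉₊ - 1` is a valid index at both endpoints `0` and `1`.
  refine ⟨⟨⌈u * b⌉₊ - 1, by omega⟩, (div_le_iff₀ hb').2 ?_, (le_div_iff₀ hb').2 ?_⟩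
  · rcases Nat.eq_zero_or_pos ⌈u * b⌉₊ with h | h
    · simpa [h] using mul_nonneg hu.1 hb'.le
    · have := Nat.ceil_lt_add_one (mul_nonneg hu.1 hb'.le)
      push_cast [Nat.cast_sub h]
      linarith
  · calc u * b ≤ ⌈u * b⌉₊ := Nat.le_ceil _
      _ ≤ ((⌈u * b⌉₊ - 1 : ℕ) : ℝ) + 1 := by exact_mod_cast le_tsub_add

lemma exists_mem_gridCell {b : ℕ} (hb : 0 < b) {p : EuclideanSpace ℝ ι} (hp : p ∈ unitCube ι) :
    ∃ a : ι → Fin b, p ∈ gridCell a := by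
  choose a ha using fun i => exists_fin_mem_Icc_div hb (hp i)
  exact ⟨a, ha⟩

lemma abs_sub_le_of_mem_gridCell {b : ℕ} {a c : ι → Fin b} {p q : EuclideanSpace ℝ ι}
    (hp : p ∈ gridCell a) (hq : q ∈ gridCell c) (i : ι) :
    |p i - q i| ≤ (|(a i : ℝ) - c i| + 1) / b := by
  obtain ⟨hp₁, hp₂⟩ := hp i
  obtain ⟨hq₁, hq₂⟩ := hq i
  have hb : (0 : ℝ) < b := by exact_mod_cast (a i).pos
  rw [div_le_iff₀ hb] at hp₁ hq₁
  rw [le_div_iff₀ hb] at hp₂ hq₂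
  have habs : |(p i - q i) * b| = |p i - q i| * b := by rw [abs_mul, Nat.abs_cast]
  rw [le_div_iff₀ hb, ← habs, abs_le]
  constructor <;> linarith [le_abs_self ((a i : ℝ) - c i), neg_abs_le ((a i : ℝ) - c i)]

variable [Fintype ι]

lemma norm_sub_le_of_mem_gridCell {b : ℕ} {a c : ι → Fin b} {p q : EuclideanSpace ℝ ι}
    (hp : p ∈ gridCell a) (hq : q ∈ gridCell c) :
    ‖p - q‖ ≤ √(∑ i, (|(a i : ℝ) - c i| + 1) ^ 2) / b := by
  calc ‖p - q‖ = √(∑ i, |p i - q i| ^ 2) := by simp [EuclideanSpace.norm_eq]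
    _ ≤ √(∑ i, ((|(a i : ℝ) - c i| + 1) / b) ^ 2) := by
      gcongr with i
      exact abs_sub_le_of_mem_gridCell hp hq i
    _ = √(∑ i, (|(a i : ℝ) - c i| + 1) ^ 2) / b := by
      simp only [div_pow, ← Finset.sum_div]
      rw [Real.sqrt_div' _ (by positivity), Real.sqrt_sq b.cast_nonneg]

lemma norm_sub_le_of_mem_same_gridCell {b : ℕ} {a : ι → Fin b} {p q : EuclideanSpace ℝ ι}
    (hp : p ∈ gridCell a) (hq : q ∈ gridCell a) : ‖p - q‖ ≤ √(Fintype.card ι) / b := by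
  simpa using norm_sub_le_of_mem_gridCell hp hq

lemma norm_sub_le_of_mem_gridCell_of_covBy {b : ℕ} {a c : ι → Fin b} (hac : a ⋖ c)
    {p q : EuclideanSpace ℝ ι} (hp : p ∈ gridCell a) (hq : q ∈ gridCell c) :
    ‖p - q‖ ≤ √(Fintype.card ι + 3) / b := by
  classical
  obtain ⟨i, hi, hne⟩ := Pi.covBy_iff.1 hac
  have hci : (c i : ℝ) = a i + 1 := by
    exact_mod_cast (Nat.covBy_iff_add_one_eq.1 (Fin.covBy_iff.1 hi)).symm
  have hterm (j : ι) : (|(a j : ℝ) - c j| + 1) ^ 2 = 1 + if j = i then 3 else 0 := by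
    split_ifs with hj
    · rw [hj, hci]; norm_num
    · simp [hne j hj]
  simpa [hterm, Finset.sum_add_distrib] using norm_sub_le_of_mem_gridCell hp hq

lemma geometricGraph_connected_of_forall_gridCell {V : Type*} {b : ℕ} (hb : 0 < b)
    {x : V → EuclideanSpace ℝ ι} {r : ℝ} (hr : √(Fintype.card ι + 3) / b ≤ r)
    (hcube : ∀ v, x v ∈ unitCube ι) (hhit : ∀ a : ι → Fin b, ∃ v, x v ∈ gridCell a) :
    (geometricGraph x r).Connected := by
  classical
  have : NeZero b := ⟨hb.ne'⟩
  have : Nonempty V := (hhit 0).nonempty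
  have hr' : √(Fintype.card ι) / b ≤ r := le_trans (by gcongr; simp) hr
  have reachable_of_covBy {a c : ι → Fin b} (hac : a ⋖ c) {v w : V} (hv : x v ∈ gridCell a)
      (hw : x w ∈ gridCell c) : (geometricGraph x r).Reachable v w :=
    geometricGraph_reachable_of_norm_sub_le
      ((norm_sub_le_of_mem_gridCell_of_covBy hac hv hw).trans hr)
  refine ⟨preconnected_of_cover (hasse_preconnected_of_isCodirectedOrder (ι → Fin b))
    (C := fun a => x ⁻¹' gridCell a) (fun v => exists_mem_gridCell hb (hcube v)) ?_ ?_⟩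
  · intro a v hv w hw
    exact geometricGraph_reachable_of_norm_sub_le
      ((norm_sub_le_of_mem_same_gridCell hv hw).trans hr')
  · intro a c hac
    obtain ⟨v, hv⟩ := hhit a
    obtain ⟨w, hw⟩ := hhit c
    refine ⟨v, hv, w, hw, ?_⟩
    rcases hac with hac | hca
    · exact reachable_of_covBy hac hv hw
    · exact (reachable_of_covBy hca hw hv).symm

end Grid

section Volume

variable {ι : Type*}

lemma setOf_forall_mem_Icc_eq_preimage (u v : ι → ℝ) :
    {p : EuclideanSpace ℝ ι | ∀ i, p i ∈ Set.Icc (u i) (v i)} = WithLp.ofLp ⁻¹' Set.Icc u v := by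
  ext p
  simp [Pi.le_def, forall_and]

lemma measurableSet_setOf_forall_mem_Icc [Countable ι] (u v : ι → ℝ) :
    MeasurableSet {p : EuclideanSpace ℝ ι | ∀ i, p i ∈ Set.Icc (u i) (v i)} :=
  setOf_forall_mem_Icc_eq_preimage u v ▸
    WithLp.measurable_ofLp 2 _ measurableSet_Icc

lemma measurableSet_unitCube [Countable ι] : MeasurableSet (unitCube ι) :=
  measurableSet_setOf_forall_mem_Icc 0 1

lemma measurableSet_gridCell [Countable ι] {b : ℕ} (a : ι → Fin b) : MeasurableSet (gridCell a) :=
  measurableSet_setOf_forall_mem_Icc _ _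

variable [Fintype ι]

lemma volume_setOf_forall_mem_Icc (u v : ι → ℝ) :
    volume {p : EuclideanSpace ℝ ι | ∀ i, p i ∈ Set.Icc (u i) (v i)} =
      ∏ i, ENNReal.ofReal (v i - u i) := by
  rw [setOf_forall_mem_Icc_eq_preimage, (PiLp.volume_preserving_ofLp ι).measure_preimage
    measurableSet_Icc.nullMeasurableSet, Real.volume_Icc_pi]

instance isProbabilityMeasure_volume_restrict_unitCube :
    IsProbabilityMeasure ((volume : Measure (EuclideanSpace ℝ ι)).restrict (unitCube ι)) :=
  ⟨by simpa [unitCube] using volume_setOf_forall_mem_Icc (0 : ι → ℝ) 1⟩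

lemma volume_restrict_unitCube_real_gridCell {b : ℕ} (a : ι → Fin b) :
    (volume.restrict (unitCube ι)).real (gridCell a) = ((b : ℝ) ^ Fintype.card ι)⁻¹ := by
  rw [measureReal_restrict_apply (measurableSet_gridCell a),
    Set.inter_eq_left.2 (gridCell_subset_unitCube a), measureReal_def, gridCell,
    volume_setOf_forall_mem_Icc]
  simp [← sub_div]

end Volume

section Occupancy

lemma ae_pi_forall_mem {V X : Type*} [Fintype V] [MeasurableSpace X] {μ : Measure X} [SigmaFinite μ]
    {s : Set X} (hs : ∀ᵐ p ∂μ, p ∈ s) : ∀ᵐ x ∂Measure.pi fun _ : V => μ, ∀ v, x v ∈ s :=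
  Filter.eventually_all.2 fun _ => Measure.tendsto_eval_ae_ae.eventually hs

lemma one_sub_le_measureReal_pi_forall_exists_mem {V κ X : Type*} [Fintype V] [Fintype κ]
    [MeasurableSpace X] {μ : Measure X} [IsProbabilityMeasure μ] {C : κ → Set X}
    (hC : ∀ k, MeasurableSet (C k)) {p : ℝ} (hp : ∀ k, p ≤ μ.real (C k)) :
    1 - Fintype.card κ * (1 - p) ^ Fintype.card V ≤
      (Measure.pi fun _ : V => μ).real {x | ∀ k, ∃ v, x v ∈ C k} := by
  set hit : Set (V → X) := {x | ∀ k, ∃ v, x v ∈ C k}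
  have hmiss (k : κ) : (Measure.pi fun _ : V => μ).real (Set.univ.pi fun _ => (C k)ᶜ) ≤
      (1 - p) ^ Fintype.card V := by
    rw [measureReal_def, Measure.pi_pi, Finset.prod_const, ENNReal.toReal_pow, ← measureReal_def,
      Finset.card_univ, probReal_compl_eq_one_sub (hC k)]
    gcongr
    exacts [sub_nonneg.2 measureReal_le_one, hp k]
  have hcompl : hitᶜ = ⋃ k, Set.univ.pi fun _ => (C k)ᶜ := by
    ext x
    simp [hit]
  have hunion : (Measure.pi fun _ : V => μ).real hitᶜ ≤
      Fintype.card κ * (1 - p) ^ Fintype.card V := by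
    calc (Measure.pi fun _ : V => μ).real hitᶜ
        ≤ ∑ k, (Measure.pi fun _ : V => μ).real (Set.univ.pi fun _ => (C k)ᶜ) :=
          hcompl ▸ measureReal_iUnion_fintype_le _
      _ ≤ ∑ _ : κ, (1 - p) ^ Fintype.card V := Finset.sum_le_sum fun k _ => hmiss k
      _ = Fintype.card κ * (1 - p) ^ Fintype.card V := by simp
  have hadd : 1 ≤ (Measure.pi fun _ : V => μ).real hit + (Measure.pi fun _ : V => μ).real hitᶜ := by
    simpa using measureReal_union_le (μ := Measure.pi fun _ : V => μ) hit hitᶜ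
  linarith

lemma mul_one_sub_pow_le_of_log_div_le {K ε p : ℝ} (hK : 0 < K) (hε : 0 < ε) (hp : p ≤ 1) {n : ℕ}
    (hn : Real.log (K / ε) ≤ p * n) : K * (1 - p) ^ n ≤ ε := by
  calc K * (1 - p) ^ n ≤ K * Real.exp (-p) ^ n := by
        have := sub_nonneg.2 hp
        gcongr
        exact Real.one_sub_le_exp_neg p
    _ = K * Real.exp (-(p * n)) := by rw [← Real.exp_nat_mul]; ring_nf
    _ ≤ K * Real.exp (-Real.log (K / ε)) := by gcongr
    _ = ε := by rw [Real.exp_neg, Real.exp_log (by positivity)]; field_simp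

lemma ofReal_one_sub_le_measure_pi_forall_gridCell {ι V : Type*} [Fintype ι] [Fintype V]
    {b : ℕ} (hb : 0 < b) {ε : ℝ} (hε : 0 < ε)
    (hn : (b : ℝ) ^ Fintype.card ι * Real.log ((b : ℝ) ^ Fintype.card ι / ε) ≤ Fintype.card V) :
    ENNReal.ofReal (1 - ε) ≤ (Measure.pi fun _ : V => volume.restrict (unitCube ι))
      {x | ∀ a : ι → Fin b, ∃ v, x v ∈ gridCell a} := by
  classical
  have hb1 : (1 : ℝ) ≤ b := by exact_mod_cast hb
  have hmiss : (b : ℝ) ^ Fintype.card ι * (1 - ((b : ℝ) ^ Fintype.card ι)⁻¹) ^ Fintype.card V ≤ ε :=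
    mul_one_sub_pow_le_of_log_div_le (by positivity) hε (inv_le_one_of_one_le₀ (one_le_pow₀ hb1))
      ((le_inv_mul_iff₀ (by positivity)).2 hn)
  have hhit := one_sub_le_measureReal_pi_forall_exists_mem (V := V) measurableSet_gridCell
    fun a : ι → Fin b => (volume_restrict_unitCube_real_gridCell a).ge
  refine ENNReal.ofReal_le_of_le_toReal (le_trans ?_ hhit)
  rw [Fintype.card_fun, Fintype.card_fin, Nat.cast_pow]
  linarith

end Occupancy

lemma ceil_sqrt_mul_div_min_bounds {s t r r' : ℝ} (hs : 0 < s) (ht : 0 < t) (hr : 0 < r)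
    (hr' : 0 < r') {b : ℕ} (hb : ⌈√(s * t) / min (√s * r) (√t * r')⌉₊ = b) :
    0 < b ∧ √s / b ≤ r' ∧ √t / b ≤ r := by
  have hb₀ : 0 < b := hb ▸ Nat.ceil_pos.2 (by positivity)
  have hle : √(s * t) / min (√s * r) (√t * r') ≤ b := hb ▸ Nat.le_ceil _
  rw [Real.sqrt_mul hs.le] at hle
  refine ⟨hb₀, (div_le_comm₀ hr' (by positivity)).1 ?_, (div_le_comm₀ hr (by positivity)).1 ?_⟩
  · calc √s / r' = √s * √t / (√t * r') := by field_simp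
      _ ≤ √s * √t / min (√s * r) (√t * r') := by gcongr; exact min_le_right _ _
      _ ≤ b := hle
  · calc √t / r = √s * √t / (√s * r) := by field_simp
      _ ≤ √s * √t / min (√s * r) (√t * r') := by gcongr; exact min_le_left _ _
      _ ≤ b := hle

theorem stmt_14_general {ι V T : Type*} [Fintype ι] [Fintype V] {b : ℕ} (hb : 0 < b)
    {rcomm rsense ε : ℝ} (hcomm : √(Fintype.card ι + 3) / b ≤ rcomm)
    (hsense : √(Fintype.card ι) / b ≤ rsense) (hε : 0 < ε)
    (hn : (b : ℝ) ^ Fintype.card ι * Real.log ((b : ℝ) ^ Fintype.card ι / ε) ≤ Fintype.card V)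
    (ν : Measure (T → EuclideanSpace ℝ ι)) [IsProbabilityMeasure ν]
    (hν : ∀ᵐ y ∂ν, ∀ j, y j ∈ unitCube ι) :
    ENNReal.ofReal (1 - ε) ≤ ((Measure.pi fun _ : V => volume.restrict (unitCube ι)).prod ν)
      {ω | (geometricGraph ω.1 rcomm).Connected ∧ ∀ j, ∃ i, ‖ω.2 j - ω.1 i‖ ≤ rsense} := by
  set μ := Measure.pi fun _ : V => volume.restrict (unitCube ι)
  have hμ : ∀ᵐ x ∂μ, ∀ v, x v ∈ unitCube ι :=
    ae_pi_forall_mem (ae_restrict_mem measurableSet_unitCube)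
  calc ENNReal.ofReal (1 - ε)
      ≤ μ {x | ∀ a : ι → Fin b, ∃ v, x v ∈ gridCell a} :=
        ofReal_one_sub_le_measure_pi_forall_gridCell hb hε hn
    _ = (μ.prod ν) ({x | ∀ a : ι → Fin b, ∃ v, x v ∈ gridCell a} ×ˢ Set.univ) := by simp
    _ ≤ _ := measure_mono_ae ?_
  filter_upwards [Measure.quasiMeasurePreserving_fst.ae hμ,
    Measure.quasiMeasurePreserving_snd.ae hν] with ω hx hy ⟨hhit, _⟩
  refine ⟨geometricGraph_connected_of_forall_gridCell hb hcomm hx hhit, fun j => ?_⟩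
  obtain ⟨a, ha⟩ := exists_mem_gridCell hb (hy j)
  obtain ⟨i, hi⟩ := hhit a
  exact ⟨i, (norm_sub_le_of_mem_same_gridCell ha hi).trans hsense⟩

/-- let `x₁,…,x_n` (robots) and `y₁,…,y_n` (targets) be `2n` mutually
independent uniform points in the unit square (modeled by the product measure on pairs of
configurations `ω = (x, y)`).  Fix `r_comm, r_sense > 0` and `0 < ε < 1`, and set
`θ = min(√5·r_sense, √2·r_comm)` and `b = ⌈√10/θ⌉`.  If `n ≥ b²·log(b²/ε)` then with
probability at least `1 − ε`, simultaneously (i) the communication graph (radius `r_comm`) of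
the robots is connected and (ii) every target is within distance `r_sense` of some robot. -/
theorem stmt_14 (rcomm rsense ε : ℝ) (hrc : 0 < rcomm) (hrs : 0 < rsense)
    (hε0 : 0 < ε) (hε1 : ε < 1) (n : ℕ)
    (hn : (⌈Real.sqrt 10 / min (Real.sqrt 5 * rsense) (Real.sqrt 2 * rcomm)⌉₊ : ℝ) ^ 2 *
        Real.log
          ((⌈Real.sqrt 10 / min (Real.sqrt 5 * rsense) (Real.sqrt 2 * rcomm)⌉₊ : ℝ) ^ 2 / ε)
      ≤ (n : ℝ)) :
    ENNReal.ofReal (1 - ε) ≤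
      ((Measure.pi fun _ : Fin n => unifSquare).prod (Measure.pi fun _ : Fin n => unifSquare))
        {ω : (Fin n → EuclideanSpace ℝ (Fin 2)) × (Fin n → EuclideanSpace ℝ (Fin 2)) |
          (geomGraph ω.1 rcomm).Connected ∧
          ∀ j : Fin n, ∃ i : Fin n, ‖ω.2 j - ω.1 i‖ ≤ rsense} := by
  generalize hb : ⌈√10 / min (√5 * rsense) (√2 * rcomm)⌉₊ = b at hn
  obtain ⟨hb₀, hcomm, hsense⟩ := ceil_sqrt_mul_div_min_bounds (s := 5) (t := 2) (b := b)
    (by norm_num) (by norm_num) hrs hrc (by norm_num [hb])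
  exact stmt_14_general (ι := Fin 2) (V := Fin n) hb₀ (by norm_num [hcomm]) (by simpa) hε0
    (by simpa) (Measure.pi fun _ : Fin n => volume.restrict (unitCube (Fin 2)))
    (ae_pi_forall_mem (ae_restrict_mem measurableSet_unitCube))
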